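/- Assume the integral VHI data hypotheses together with: K ⊆ V nonempty, closed and convex; A : V → V* Lipschitz continuous and strongly monotone with constant m_A > 0; Φ : V → ℝ convex and continuous; f ∈ V*; and α_ψ c_Δ² < m_A. Let Vʰ be a finite-dimensional linear subspace of V and let Kʰ be a nonempty, closed and convex subset of Vʰ. Then the discrete problem: find uʰ ∈ Kʰ such that ⟨Auʰ, vʰ − uʰ⟩ + Φ(vʰ) − Φ(uʰ) + ∫_Δ ψ⁰(γ_ψ uʰ(x); γ_ψ vʰ(x) − γ_ψ uʰ(x)) dμ(x) ≥ ⟨f, vʰ − uʰ⟩ for all vʰ ∈ Kʰ, has a unique solution uʰ ∈ Kʰ. -/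

import Mathlib

open Filter Topology MeasureTheory RealInnerProductSpace

/-- The Clarke (generalized) directional derivative of `f` at `u` in direction `v`. -/
noncomputable def clarkeDeriv {X : Type*} [NormedAddCommGroup X] [NormedSpace ℝ X]
    (f : X → ℝ) (u v : X) : ℝ :=
  Filter.limsup (fun p : X × ℝ => (f (p.1 + p.2 • v) - f p.1) / p.2)
    ((𝓝 u) ×ˢ 𝓝[>] (0:ℝ))

section Clarke

variable {X : Type*} [NormedAddCommGroup X] [NormedSpace ℝ X] {f : X → ℝ}

lemma LocallyLipschitz.eventually_abs_quotient_le (hf : LocallyLipschitz f) (u v : X) :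
    ∃ C : ℝ, ∀ᶠ p : X × ℝ in (𝓝 u) ×ˢ 𝓝[>] (0 : ℝ),
      |(f (p.1 + p.2 • v) - f p.1) / p.2| ≤ C := by
  obtain ⟨L, s, hs, hL⟩ := hf u
  refine ⟨L * ‖v‖, ?_⟩
  have h1 : ∀ᶠ p : X × ℝ in (𝓝 u) ×ˢ 𝓝[>] (0 : ℝ), p.1 ∈ s :=
    tendsto_fst.eventually hs
  have h2 : ∀ᶠ p : X × ℝ in (𝓝 u) ×ˢ 𝓝[>] (0 : ℝ), 0 < p.2 :=
    tendsto_snd.eventually self_mem_nhdsWithin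
  have h3 : Tendsto (fun p : X × ℝ => p.1 + p.2 • v) ((𝓝 u) ×ˢ 𝓝[>] (0 : ℝ)) (𝓝 u) := by
    have h0 : Tendsto (fun p : X × ℝ => p.2) ((𝓝 u) ×ˢ 𝓝[>] (0 : ℝ)) (𝓝 0) :=
      tendsto_snd.mono_right nhdsWithin_le_nhds
    simpa using tendsto_fst.add (h0.smul_const v)
  filter_upwards [h1, h2, h3.eventually hs] with p hp1 hp2 hp3
  have h := hL.norm_sub_le hp3 hp1
  rw [add_sub_cancel_left, norm_smul, Real.norm_eq_abs, Real.norm_eq_abs, abs_of_pos hp2] at h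
  rw [abs_div, abs_of_pos hp2, div_le_iff₀ hp2]
  linarith

lemma LocallyLipschitz.clarkeDeriv_le (hf : LocallyLipschitz f) {u v : X} {a : ℝ}
    (h : ∀ᶠ p : X × ℝ in (𝓝 u) ×ˢ 𝓝[>] (0 : ℝ), (f (p.1 + p.2 • v) - f p.1) / p.2 ≤ a) :
    clarkeDeriv f u v ≤ a := by
  obtain ⟨C, hC⟩ := hf.eventually_abs_quotient_le u v
  have hb : IsBoundedUnder (· ≥ ·) ((𝓝 u) ×ˢ 𝓝[>] (0 : ℝ))
      (fun p : X × ℝ => (f (p.1 + p.2 • v) - f p.1) / p.2) :=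
    ⟨-C, eventually_map.2 (hC.mono fun p hp => (abs_le.1 hp).1)⟩
  exact limsup_le_of_le hb.isCoboundedUnder_le h

lemma LocallyLipschitz.eventually_lt_of_clarkeDeriv_lt (hf : LocallyLipschitz f) {u v : X} {b : ℝ}
    (h : clarkeDeriv f u v < b) :
    ∀ᶠ p : X × ℝ in (𝓝 u) ×ˢ 𝓝[>] (0 : ℝ), (f (p.1 + p.2 • v) - f p.1) / p.2 < b := by
  obtain ⟨C, hC⟩ := hf.eventually_abs_quotient_le u v
  exact eventually_lt_of_limsup_lt h
    ⟨C, eventually_map.2 (hC.mono fun p hp => (abs_le.1 hp).2)⟩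

lemma LocallyLipschitz.clarkeDeriv_smul_le (hf : LocallyLipschitz f) (u v : X) {s : ℝ}
    (hs : 0 < s) : clarkeDeriv f u (s • v) ≤ s * clarkeDeriv f u v := by
  have key : ∀ b, clarkeDeriv f u v < b → clarkeDeriv f u (s • v) ≤ s * b := by
    intro b hb
    apply hf.clarkeDeriv_le
    have ht : Tendsto (fun t : ℝ => t * s) (𝓝[>] 0) (𝓝[>] 0) := by
      refine tendsto_nhdsWithin_iff.2 ⟨?_, ?_⟩
      · have : Tendsto (fun t : ℝ => t * s) (𝓝 0) (𝓝 (0 * s)) := tendsto_id.mul_const s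
        rw [zero_mul] at this
        exact this.mono_left nhdsWithin_le_nhds
      · filter_upwards [self_mem_nhdsWithin] with t ht
        exact mul_pos ht hs
    have h2 : ∀ᶠ p : X × ℝ in (𝓝 u) ×ˢ 𝓝[>] (0 : ℝ), 0 < p.2 :=
      tendsto_snd.eventually self_mem_nhdsWithin
    filter_upwards [(tendsto_fst.prodMk (ht.comp tendsto_snd)).eventually
      (hf.eventually_lt_of_clarkeDeriv_lt hb), h2] with p hp hp2
    simp only [Function.comp_apply] at hp
    rw [smul_smul, div_le_iff₀ hp2]
    rw [div_lt_iff₀ (mul_pos hp2 hs)] at hp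
    linarith
  rw [← div_le_iff₀' hs]
  exact le_of_forall_gt_imp_ge_of_dense fun b hb => (div_le_iff₀' hs).2 (key b hb)

lemma LocallyLipschitz.clarkeDeriv_smul (hf : LocallyLipschitz f) (u v : X) {s : ℝ}
    (hs : 0 < s) : clarkeDeriv f u (s • v) = s * clarkeDeriv f u v := by
  refine le_antisymm (hf.clarkeDeriv_smul_le u v hs) ?_
  have h := hf.clarkeDeriv_smul_le u (s • v) (inv_pos.2 hs)
  rwa [smul_smul, inv_mul_cancel₀ hs.ne', one_smul, ← div_eq_inv_mul, le_div_iff₀' hs] at h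

lemma LocallyLipschitz.clarkeDeriv_add_le (hf : LocallyLipschitz f) (u v w : X) :
    clarkeDeriv f u (v + w) ≤ clarkeDeriv f u v + clarkeDeriv f u w := by
  refine le_of_forall_pos_le_add fun ε hε => hf.clarkeDeriv_le ?_
  have hw := hf.eventually_lt_of_clarkeDeriv_lt
    (show clarkeDeriv f u w < clarkeDeriv f u w + ε / 2 by linarith)
  have hv := hf.eventually_lt_of_clarkeDeriv_lt
    (show clarkeDeriv f u v < clarkeDeriv f u v + ε / 2 by linarith)
  have h3 : Tendsto (fun p : X × ℝ => (p.1 + p.2 • w, p.2)) ((𝓝 u) ×ˢ 𝓝[>] (0 : ℝ))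
      ((𝓝 u) ×ˢ 𝓝[>] (0 : ℝ)) := by
    have h0 : Tendsto (fun p : X × ℝ => p.2) ((𝓝 u) ×ˢ 𝓝[>] (0 : ℝ)) (𝓝 0) :=
      tendsto_snd.mono_right nhdsWithin_le_nhds
    refine Tendsto.prodMk ?_ tendsto_snd
    simpa using tendsto_fst.add (h0.smul_const w)
  filter_upwards [hw, h3.eventually hv] with p hp hq
  have e : (f (p.1 + p.2 • (v + w)) - f p.1) / p.2 =
      (f (p.1 + p.2 • w + p.2 • v) - f (p.1 + p.2 • w)) / p.2 +
        (f (p.1 + p.2 • w) - f p.1) / p.2 := by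
    rw [smul_add, add_comm (p.2 • v), ← add_assoc]; ring
  rw [e]
  linarith

lemma LocallyLipschitz.eventually_quotient_lt (hf : LocallyLipschitz f) {u v : X} {b : ℝ}
    (h : clarkeDeriv f u v < b) : ∀ᶠ t : ℝ in 𝓝[>] 0, (f (u + t • v) - f u) / t < b :=
  (tendsto_const_nhds.prodMk tendsto_id).eventually (hf.eventually_lt_of_clarkeDeriv_lt h)

lemma LocallyLipschitz.eventually_backward_quotient_lt (hf : LocallyLipschitz f) {u v : X} {b : ℝ}
    (h : clarkeDeriv f u (-v) < b) : ∀ᶠ t : ℝ in 𝓝[>] 0, (f u - f (u + t • v)) / t < b := by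
  have h3 : Tendsto (fun t : ℝ => (u + t • v, t)) (𝓝[>] (0 : ℝ))
      ((𝓝 u) ×ˢ 𝓝[>] (0 : ℝ)) := by
    have h0 : Tendsto (fun t : ℝ => t) (𝓝[>] (0 : ℝ)) (𝓝 0) := nhdsWithin_le_nhds
    refine Tendsto.prodMk ?_ tendsto_id
    simpa using tendsto_const_nhds.add (h0.smul_const v)
  simpa using h3.eventually (hf.eventually_lt_of_clarkeDeriv_lt h)

/-- Relaxed monotonicity of the Clarke derivative makes it a subgradient-type lower bound. -/
lemma LocallyLipschitz.clarkeDeriv_sub_le (hf : LocallyLipschitz f) {α : ℝ}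
    (hmon : ∀ z₁ z₂ : X,
      clarkeDeriv f z₁ (z₂ - z₁) + clarkeDeriv f z₂ (z₁ - z₂) ≤ α * ‖z₁ - z₂‖ ^ 2) (z w : X) :
    clarkeDeriv f z w - α / 2 * ‖w‖ ^ 2 ≤ f (z + w) - f z := by
  set a := clarkeDeriv f z w with ha
  have hcont : Continuous fun s : ℝ => f (z + s • w) := hf.continuous.comp (by fun_prop)
  have hback : ∀ s : ℝ, 0 < s → clarkeDeriv f (z + s • w) (-w) ≤ α * s * ‖w‖ ^ 2 - a := by
    intro s hs
    have h := hmon z (z + s • w)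
    rw [add_sub_cancel_left, sub_add_cancel_left, ← smul_neg, hf.clarkeDeriv_smul _ _ hs,
      hf.clarkeDeriv_smul _ _ hs, smul_neg, norm_neg, norm_smul, Real.norm_eq_abs, abs_of_pos hs]
      at h
    have h' : s * (a + clarkeDeriv f (z + s • w) (-w)) ≤ s * (α * s * ‖w‖ ^ 2) := by
      rw [← ha] at h; linarith
    linarith [le_of_mul_le_mul_left h' hs]
  have hε : ∀ ε ∈ Set.Ioo (0 : ℝ) 1, a * (1 - ε) - α / 2 * (1 - ε ^ 2) * ‖w‖ ^ 2 ≤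
      f (z + w) - f (z + ε • w) := by
    intro ε hε
    have := image_le_of_liminf_slope_right_le_deriv_boundary
      (f := fun s : ℝ => -f (z + s • w)) (a := ε) (b := 1)
      (B := fun s => -f (z + ε • w) + (α / 2 * (s ^ 2 - ε ^ 2) * ‖w‖ ^ 2 - a * (s - ε)))
      (B' := fun s => α * s * ‖w‖ ^ 2 - a)
      hcont.neg.continuousOn (by simp) (by fun_prop) ?_ ?_
      (Set.right_mem_Icc.2 hε.2.le)
    · rw [one_smul] at this
      linarith
    · intro x _
      have h1 : HasDerivAt (fun s : ℝ => s ^ 2 - ε ^ 2) (2 * x) x := by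
        simpa using (hasDerivAt_pow 2 x).sub_const (ε ^ 2)
      have h2 : HasDerivAt (fun s : ℝ => a * (s - ε)) (a * 1) x :=
        ((hasDerivAt_id x).sub_const ε).const_mul a
      have h3 := (((h1.const_mul (α / 2)).mul_const (‖w‖ ^ 2)).sub h2).const_add (-f (z + ε • w))
      refine (h3.congr_deriv ?_).hasDerivWithinAt
      ring
    · intro x hx r hr
      have hx0 : 0 < x := hε.1.trans_le hx.1
      have h := hf.eventually_backward_quotient_lt ((hback x hx0).trans_lt hr)
      have ht : Tendsto (fun y : ℝ => y - x) (𝓝[>] x) (𝓝[>] 0) := by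
        refine tendsto_nhdsWithin_iff.2 ⟨?_, ?_⟩
        · have : Tendsto (fun y : ℝ => y - x) (𝓝 x) (𝓝 (x - x)) := tendsto_id.sub_const x
          rw [sub_self] at this
          exact this.mono_left nhdsWithin_le_nhds
        · filter_upwards [self_mem_nhdsWithin] with y hy
          exact sub_pos.2 (Set.mem_Ioi.1 hy)
      refine Eventually.frequently ?_
      filter_upwards [ht.eventually h] with y hy
      rw [slope_def_field]
      have e : z + x • w + (y - x) • w = z + y • w := by module
      rw [e] at hy
      convert hy using 2
      ring
  have hl : Tendsto (fun ε : ℝ => a * (1 - ε) - α / 2 * (1 - ε ^ 2) * ‖w‖ ^ 2) (𝓝[>] 0)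
      (𝓝 (a - α / 2 * ‖w‖ ^ 2)) := by
    have : Continuous fun ε : ℝ => a * (1 - ε) - α / 2 * (1 - ε ^ 2) * ‖w‖ ^ 2 := by fun_prop
    simpa using (this.tendsto 0).mono_left nhdsWithin_le_nhds
  have hr : Tendsto (fun ε : ℝ => f (z + w) - f (z + ε • w)) (𝓝[>] 0) (𝓝 (f (z + w) - f z)) := by
    simpa using ((hcont.tendsto 0).const_sub (f (z + w))).mono_left nhdsWithin_le_nhds
  exact le_of_tendsto_of_tendsto hl hr
    (by filter_upwards [Ioo_mem_nhdsGT one_pos] with ε h using hε ε h)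

lemma LocallyLipschitz.tendsto_quotient_clarkeDeriv (hf : LocallyLipschitz f) {α : ℝ}
    (hmon : ∀ z₁ z₂ : X,
      clarkeDeriv f z₁ (z₂ - z₁) + clarkeDeriv f z₂ (z₁ - z₂) ≤ α * ‖z₁ - z₂‖ ^ 2) (z w : X) :
    Tendsto (fun t : ℝ => (f (z + t • w) - f z) / t) (𝓝[>] 0) (𝓝 (clarkeDeriv f z w)) := by
  refine tendsto_order.2 ⟨fun b hb => ?_, fun b hb => hf.eventually_quotient_lt hb⟩
  have hl : Tendsto (fun t : ℝ => clarkeDeriv f z w - α / 2 * t * ‖w‖ ^ 2) (𝓝[>] 0)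
      (𝓝 (clarkeDeriv f z w)) := by
    have : Continuous fun t : ℝ => clarkeDeriv f z w - α / 2 * t * ‖w‖ ^ 2 := by fun_prop
    simpa using (this.tendsto 0).mono_left nhdsWithin_le_nhds
  filter_upwards [hl.eventually (lt_mem_nhds hb), self_mem_nhdsWithin] with t ht ht0
  have ht0 : 0 < t := ht0
  have h := hf.clarkeDeriv_sub_le hmon z (t • w)
  rw [hf.clarkeDeriv_smul _ _ ht0, norm_smul, Real.norm_eq_abs, abs_of_pos ht0] at h
  refine ht.trans_le ?_
  rw [le_div_iff₀ ht0]
  linarith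

end Clarke

section Subgradient

variable {E : Type*} [NormedAddCommGroup E] [InnerProductSpace ℝ E]

lemma LocallyLipschitz.exists_inner_le_clarkeDeriv [FiniteDimensional ℝ E] {f : E → ℝ}
    (hf : LocallyLipschitz f) (z : E) : ∃ ξ : E, ∀ w, ⟪ξ, w⟫ ≤ clarkeDeriv f z w := by
  have h0 : 0 ≤ clarkeDeriv f z 0 := by
    have := hf.clarkeDeriv_add_le z 0 0
    rw [add_zero] at this
    linarith
  obtain ⟨g, -, hg⟩ := exists_extension_of_le_sublinear (⊥ : E →ₗ.[ℝ] ℝ) (clarkeDeriv f z)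
    (fun c hc x => hf.clarkeDeriv_smul z x hc) (fun x y => hf.clarkeDeriv_add_le z x y) (by
      rintro ⟨x, hx⟩
      obtain rfl : x = 0 := (Submodule.mem_bot ℝ).1 hx
      refine le_of_eq_of_le ?_ h0
      exact LinearPMap.map_zero _)
  refine ⟨(InnerProductSpace.toDual ℝ E).symm (LinearMap.toContinuousLinearMap g), fun w => ?_⟩
  rw [InnerProductSpace.toDual_symm_apply]
  exact hg w

variable {f : E → ℝ} {c α : ℝ}

lemma convexOn_add_sq_of_exists_subgradient
    (hsub : ∀ p, ∃ ξ : E, ‖ξ‖ ≤ c * (1 + ‖p‖) ∧ ∀ w, ⟪ξ, w⟫ - α / 2 * ‖w‖ ^ 2 ≤ f (p + w) - f p) :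
    ConvexOn ℝ Set.univ fun z => f z + α / 2 * ‖z‖ ^ 2 := by
  refine ⟨convex_univ, fun x _ y _ a b ha hb hab => ?_⟩
  set p := a • x + b • y with hp
  obtain ⟨ξ, -, hξ⟩ := hsub p
  have key : ∀ x, ⟪ξ + α • p, x - p⟫ + (f p + α / 2 * ‖p‖ ^ 2) ≤ f x + α / 2 * ‖x‖ ^ 2 := by
    intro x
    have h := hξ (x - p)
    rw [add_sub_cancel] at h
    have h2 : ‖x‖ ^ 2 = ‖p‖ ^ 2 + 2 * ⟪p, x - p⟫ + ‖x - p‖ ^ 2 := by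
      rw [← norm_add_sq_real, add_sub_cancel]
    rw [inner_add_left, real_inner_smul_left, h2]
    linarith
  have hx := mul_le_mul_of_nonneg_left (key x) ha
  have hy := mul_le_mul_of_nonneg_left (key y) hb
  have h0 : a * ⟪ξ + α • p, x - p⟫ + b * ⟪ξ + α • p, y - p⟫ = 0 := by
    rw [← inner_smul_right, ← inner_smul_right, ← inner_add_right]
    have : a • (x - p) + b • (y - p) = 0 := by
      rw [smul_sub, smul_sub, sub_add_sub_comm, ← add_smul, hab, one_smul, hp, sub_self]
    rw [this, inner_zero_right]
  have h1 : f p + α / 2 * ‖p‖ ^ 2 = a * (f p + α / 2 * ‖p‖ ^ 2) + b * (f p + α / 2 * ‖p‖ ^ 2) := by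
    rw [← add_mul, hab, one_mul]
  simp only [smul_eq_mul]
  linarith

lemma abs_sub_le_of_exists_subgradient (hc : 0 ≤ c)
    (hsub : ∀ p, ∃ ξ : E, ‖ξ‖ ≤ c * (1 + ‖p‖) ∧ ∀ w, ⟪ξ, w⟫ - α / 2 * ‖w‖ ^ 2 ≤ f (p + w) - f p)
    (z w : E) :
    |f (z + w) - f z| ≤ c * (1 + ‖z‖ + ‖w‖) * ‖w‖ + α / 2 * ‖w‖ ^ 2 := by
  obtain ⟨ξ, hξn, hξ⟩ := hsub z
  obtain ⟨η, hηn, hη⟩ := hsub (z + w)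
  have h1 := hξ w
  have h2 := hη (-w)
  rw [add_neg_cancel_right, inner_neg_right, norm_neg] at h2
  have h3 := neg_le_of_abs_le (abs_real_inner_le_norm ξ w)
  have h4 := real_inner_le_norm η w
  have hw := norm_nonneg w
  have h5 : ‖ξ‖ * ‖w‖ ≤ c * (1 + ‖z‖ + ‖w‖) * ‖w‖ :=
    mul_le_mul_of_nonneg_right (hξn.trans (mul_le_mul_of_nonneg_left (by linarith) hc)) hw
  have h6 : ‖η‖ * ‖w‖ ≤ c * (1 + ‖z‖ + ‖w‖) * ‖w‖ :=
    mul_le_mul_of_nonneg_right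
      (hηn.trans (mul_le_mul_of_nonneg_left (by linarith [norm_add_le z w]) hc)) hw
  rw [abs_le]
  constructor <;> linarith

lemma abs_quotient_le_of_exists_subgradient (hc : 0 ≤ c) (hα : 0 ≤ α)
    (hsub : ∀ p, ∃ ξ : E, ‖ξ‖ ≤ c * (1 + ‖p‖) ∧ ∀ w, ⟪ξ, w⟫ - α / 2 * ‖w‖ ^ 2 ≤ f (p + w) - f p)
    (z w : E) {t : ℝ} (ht : 0 < t) (ht1 : t ≤ 1) :
    |(f (z + t • w) - f z) / t| ≤ c * (1 + ‖z‖ + ‖w‖) * ‖w‖ + α / 2 * ‖w‖ ^ 2 := by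
  have h := abs_sub_le_of_exists_subgradient hc hsub z (t • w)
  rw [norm_smul, Real.norm_eq_abs, abs_of_pos ht] at h
  rw [abs_div, abs_of_pos ht, div_le_iff₀ ht]
  refine h.trans ?_
  have hw := norm_nonneg w
  have h1 : t * ‖w‖ ≤ ‖w‖ := mul_le_of_le_one_left hw ht1
  have h2 : c * (1 + ‖z‖ + t * ‖w‖) * (t * ‖w‖) ≤ c * (1 + ‖z‖ + ‖w‖) * (t * ‖w‖) := by gcongr
  have h3 : α / 2 * (t * ‖w‖) ^ 2 ≤ α / 2 * (‖w‖ * (t * ‖w‖)) := by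
    rw [sq]
    gcongr
  linarith

end Subgradient

section VariationalInequality

variable {V : Type*} [NormedAddCommGroup V] [InnerProductSpace ℝ V]

lemma ConvexOn.continuousOn_submodule {J : V → ℝ} (hJ : ConvexOn ℝ Set.univ J)
    (W : Submodule ℝ V) [FiniteDimensional ℝ W] : ContinuousOn J W := by
  rw [continuousOn_iff_continuous_domRestrict]
  exact (hJ.comp_linearMap W.subtype).locallyLipschitz.continuous

lemma IsClosed.isCompact_inter_closedBall_of_subset_submodule {S : Set V} (hS : IsClosed S)
    (W : Submodule ℝ V) [FiniteDimensional ℝ W] (hSW : S ⊆ W) (x : V) (R : ℝ) :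
    IsCompact (S ∩ Metric.closedBall x R) := by
  have : ProperSpace W := FiniteDimensional.proper_real W
  have hc : IsCompact ((↑) ⁻¹' (S ∩ Metric.closedBall x R) : Set W) := by
    refine Metric.isCompact_of_isClosed_isBounded
      ((hS.inter Metric.isClosed_closedBall).preimage continuous_subtype_val) ?_
    exact (isometry_subtype_coe.antilipschitz.isBounded_preimage Metric.isBounded_closedBall).subset
      (Set.preimage_mono Set.inter_subset_right)
  have := hc.image continuous_subtype_val
  rwa [Set.image_preimage_eq_of_subset] at this
  rw [Subtype.range_coe]
  exact Set.inter_subset_left.trans hSW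

variable {S : Set V} {J : V → ℝ}

/-- Existence of the proximal point of `q` for a convex function on a closed convex subset of a
finite-dimensional subspace. -/
lemma ConvexOn.exists_prox (hJ : ConvexOn ℝ Set.univ J) (W : Submodule ℝ V)
    [FiniteDimensional ℝ W] (hSne : S.Nonempty) (hScl : IsClosed S) (hScv : Convex ℝ S)
    (hSW : S ⊆ W) (q : V) :
    ∃ u ∈ S, ∀ v ∈ S, 0 ≤ ⟪u - q, v - u⟫ + J v - J u := by
  obtain ⟨u₀, hu₀⟩ := hSne
  have hJc : ContinuousOn J S := (hJ.continuousOn_submodule W).mono hSW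
  have hball := hScl.isCompact_inter_closedBall_of_subset_submodule W hSW u₀
  obtain ⟨b, hb, hbmin⟩ := (hball 1).exists_isMinOn ⟨u₀, hu₀, by simp⟩
    (hJc.mono Set.inter_subset_left)
  set M := J u₀ - J b with hM
  have hM0 : 0 ≤ M := sub_nonneg.2 (hbmin ⟨hu₀, by simp⟩)
  have hlow : ∀ v ∈ S, 1 ≤ ‖v - u₀‖ → J u₀ - M * ‖v - u₀‖ ≤ J v := by
    intro v hv hr
    set r := ‖v - u₀‖
    have hr0 : 0 < r := one_pos.trans_le hr
    have hri : r⁻¹ ≤ 1 := inv_le_one_of_one_le₀ hr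
    have hmem : (1 - r⁻¹) • u₀ + r⁻¹ • v ∈ S ∩ Metric.closedBall u₀ 1 := by
      refine ⟨hScv hu₀ hv (by linarith) (by positivity) (by ring), ?_⟩
      rw [mem_closedBall_iff_norm, show (1 - r⁻¹) • u₀ + r⁻¹ • v - u₀ = r⁻¹ • (v - u₀) by module,
        norm_smul, Real.norm_eq_abs, abs_of_pos (inv_pos.2 hr0)]
      exact (inv_mul_cancel₀ hr0.ne').le
    have h1 : J b ≤ J ((1 - r⁻¹) • u₀ + r⁻¹ • v) := hbmin hmem
    have h2 := hJ.2 (Set.mem_univ u₀) (Set.mem_univ v) (show 0 ≤ 1 - r⁻¹ by linarith)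
      (show 0 ≤ r⁻¹ by positivity) (by ring)
    simp only [smul_eq_mul] at h2
    have h3 : r * J b ≤ r * ((1 - r⁻¹) * J u₀ + r⁻¹ * J v) :=
      mul_le_mul_of_nonneg_left (h1.trans h2) hr0.le
    have h4 : r * ((1 - r⁻¹) * J u₀ + r⁻¹ * J v) = (r - 1) * J u₀ + J v := by
      field_simp
    rw [h4] at h3
    rw [hM]
    linarith
  set F : V → ℝ := fun v => 1 / 2 * ‖v - q‖ ^ 2 + J v with hF
  have hFc : ContinuousOn F S := by
    refine ContinuousOn.add (Continuous.continuousOn (by fun_prop)) hJc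
  set R := 1 + 2 * (‖u₀ - q‖ + M) with hR
  obtain ⟨u, hu, humin⟩ := (hball R).exists_isMinOn
    ⟨u₀, hu₀, Metric.mem_closedBall_self (by positivity)⟩ (hFc.mono Set.inter_subset_left)
  have hmin : ∀ v ∈ S, F u ≤ F v := by
    intro v hv
    by_cases hvR : ‖v - u₀‖ ≤ R
    · exact humin ⟨hv, mem_closedBall_iff_norm.2 hvR⟩
    · have h1 : F u ≤ F u₀ := humin ⟨hu₀, Metric.mem_closedBall_self (by positivity)⟩
      refine h1.trans ?_
      push Not at hvR
      have hn : 0 ≤ ‖u₀ - q‖ := norm_nonneg _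
      have h2 := hlow v hv (by linarith)
      have h3 : ‖v - q‖ ^ 2 = ‖v - u₀‖ ^ 2 + 2 * ⟪v - u₀, u₀ - q⟫ + ‖u₀ - q‖ ^ 2 := by
        rw [← norm_add_sq_real, sub_add_sub_cancel]
      have h4 := neg_le_of_abs_le (abs_real_inner_le_norm (v - u₀) (u₀ - q))
      have h5 : 0 ≤ ‖v - u₀‖ * (‖v - u₀‖ - 2 * (‖u₀ - q‖ + M)) :=
        mul_nonneg (norm_nonneg _) (by linarith)
      simp only [hF]
      nlinarith
  refine ⟨u, hu.1, fun v hv => ?_⟩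
  have hl : Tendsto (fun t : ℝ => ⟪u - q, v - u⟫ + J v - J u + t * (1 / 2 * ‖v - u‖ ^ 2))
      (𝓝[>] 0) (𝓝 (⟪u - q, v - u⟫ + J v - J u)) := by
    have : Continuous fun t : ℝ => ⟪u - q, v - u⟫ + J v - J u + t * (1 / 2 * ‖v - u‖ ^ 2) := by
      fun_prop
    simpa using (this.tendsto 0).mono_left nhdsWithin_le_nhds
  refine ge_of_tendsto hl ?_
  filter_upwards [Ioo_mem_nhdsGT one_pos] with t ht
  have h1 := hmin _ (hScv hu.1 hv (show 0 ≤ 1 - t by linarith [ht.2]) ht.1.le (by ring))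
  have h2 := hJ.2 (Set.mem_univ u) (Set.mem_univ v) (show 0 ≤ 1 - t by linarith [ht.2])
    ht.1.le (by ring)
  have h3 : ‖(1 - t) • u + t • v - q‖ ^ 2 =
      ‖u - q‖ ^ 2 + 2 * (t * ⟪u - q, v - u⟫) + t ^ 2 * ‖v - u‖ ^ 2 := by
    rw [show (1 - t) • u + t • v - q = (u - q) + t • (v - u) by module, norm_add_sq_real,
      inner_smul_right, norm_smul, mul_pow, Real.norm_eq_abs, sq_abs]
  simp only [hF, smul_eq_mul] at h1 h2
  rw [h3] at h1
  have h4 : 0 ≤ t * (⟪u - q, v - u⟫ + J v - J u + t * (1 / 2 * ‖v - u‖ ^ 2)) := by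
    linarith
  exact nonneg_of_mul_nonneg_right h4 ht.1

/-- Unique solvability of a variational inequality of the second kind on a closed convex subset
of a finite-dimensional subspace. -/
theorem ConvexOn.existsUnique_variationalInequality [CompleteSpace V]
    (hJ : ConvexOn ℝ Set.univ J) (W : Submodule ℝ V)
    [FiniteDimensional ℝ W] (hSne : S.Nonempty) (hScl : IsClosed S) (hScv : Convex ℝ S)
    (hSW : S ⊆ W) (B : V → V →L[ℝ] ℝ) {L c : ℝ} (hc : 0 < c)
    (hLip : ∀ u v, ‖B u - B v‖ ≤ L * ‖u - v‖)
    (hmono : ∀ u v, c * ‖u - v‖ ^ 2 ≤ (B u - B v) (u - v)) :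
    ∃! u, u ∈ S ∧ ∀ v ∈ S, 0 ≤ B u (v - u) + J v - J u := by
  have hL : ∀ u v, ‖B u - B v‖ ≤ (|L| + c) * ‖u - v‖ := fun u v =>
    (hLip u v).trans (mul_le_mul_of_nonneg_right (by linarith [le_abs_self L]) (norm_nonneg _))
  set M := |L| + c with hM
  have hcM : c ≤ M := by linarith [abs_nonneg L]
  have hM0 : 0 < M := hc.trans_le hcM
  set ρ := c / M ^ 2 with hρ
  have hρ0 : 0 < ρ := by positivity
  set G : V → V := fun w => (InnerProductSpace.toDual ℝ V).symm (B w) with hG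
  have hGin : ∀ w v, ⟪G w, v⟫ = B w v := fun w v => InnerProductSpace.toDual_symm_apply
  have hGL : ∀ u v, ‖G u - G v‖ ≤ M * ‖u - v‖ := by
    intro u v
    rw [hG]
    simp only
    rw [← map_sub, LinearIsometryEquiv.norm_map]
    exact hL u v
  choose T hTS hT using fun w : V =>
    (hJ.smul hρ0.le).exists_prox W hSne hScl hScv hSW (w - ρ • G w)
  simp only [smul_eq_mul] at hT
  have hk0 : 0 ≤ 1 - c ^ 2 / M ^ 2 := by
    rw [sub_nonneg, div_le_one (by positivity)]
    exact pow_le_pow_left₀ hc.le hcM 2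
  have hk1 : 1 - c ^ 2 / M ^ 2 < 1 := by
    have : 0 < c ^ 2 / M ^ 2 := by positivity
    linarith
  have hcontr : ∀ w₁ w₂, ‖T w₁ - T w₂‖ ≤ √(1 - c ^ 2 / M ^ 2) * ‖w₁ - w₂‖ := by
    intro w₁ w₂
    set p := (w₁ - ρ • G w₁) - (w₂ - ρ • G w₂) with hp
    have h1 := hT w₁ _ (hTS w₂)
    have h2 := hT w₂ _ (hTS w₁)
    have h3 : ‖T w₁ - T w₂‖ ^ 2 ≤ ⟪p, T w₁ - T w₂⟫ := by
      rw [← real_inner_self_eq_norm_sq, ← sub_nonneg, ← inner_sub_left]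
      have e : ⟪p - (T w₁ - T w₂), T w₁ - T w₂⟫ = ⟪T w₁ - (w₁ - ρ • G w₁), T w₂ - T w₁⟫ +
          ⟪T w₂ - (w₂ - ρ • G w₂), T w₁ - T w₂⟫ := by
        rw [← neg_sub (T w₁) (T w₂), inner_neg_right, ← sub_eq_neg_add, ← inner_sub_left, hp]
        congr 1
        abel
      rw [e]
      linarith
    have h4 : ‖T w₁ - T w₂‖ ≤ ‖p‖ := by
      by_contra! h
      have := real_inner_le_norm p (T w₁ - T w₂)
      nlinarith [norm_nonneg p]
    refine h4.trans ?_
    refine le_of_sq_le_sq ?_ (by positivity)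
    have e : p = (w₁ - w₂) - ρ • (G w₁ - G w₂) := by rw [hp]; module
    have h5 : c * ‖w₁ - w₂‖ ^ 2 ≤ ⟪w₁ - w₂, G w₁ - G w₂⟫ := by
      rw [real_inner_comm, inner_sub_left, hGin, hGin]
      exact hmono w₁ w₂
    have h6 : ‖G w₁ - G w₂‖ ^ 2 ≤ M ^ 2 * ‖w₁ - w₂‖ ^ 2 := by
      rw [← mul_pow]
      exact pow_le_pow_left₀ (norm_nonneg _) (hGL _ _) 2
    rw [mul_pow, Real.sq_sqrt hk0, e, norm_sub_sq_real, inner_smul_right, norm_smul, mul_pow,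
      Real.norm_eq_abs, sq_abs]
    have h7 : ρ * (c * ‖w₁ - w₂‖ ^ 2) ≤ ρ * ⟪w₁ - w₂, G w₁ - G w₂⟫ :=
      mul_le_mul_of_nonneg_left h5 hρ0.le
    have h8 : ρ ^ 2 * ‖G w₁ - G w₂‖ ^ 2 ≤ ρ ^ 2 * (M ^ 2 * ‖w₁ - w₂‖ ^ 2) :=
      mul_le_mul_of_nonneg_left h6 (by positivity)
    have h9 : ρ ^ 2 * (M ^ 2 * ‖w₁ - w₂‖ ^ 2) = c ^ 2 / M ^ 2 * ‖w₁ - w₂‖ ^ 2 := by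
      rw [hρ]; field_simp
    have h10 : ρ * (c * ‖w₁ - w₂‖ ^ 2) = c ^ 2 / M ^ 2 * ‖w₁ - w₂‖ ^ 2 := by
      rw [hρ]; field_simp
    linarith
  have hTc : ContractingWith (√(1 - c ^ 2 / M ^ 2)).toNNReal T := by
    refine ⟨?_, LipschitzWith.of_dist_le_mul fun w₁ w₂ => ?_⟩
    · rw [Real.toNNReal_lt_one, Real.sqrt_lt' one_pos]
      simpa using hk1
    · rw [dist_eq_norm, dist_eq_norm, Real.coe_toNNReal _ (Real.sqrt_nonneg _)]
      exact hcontr w₁ w₂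
  have hfix : T (ContractingWith.fixedPoint T hTc) = ContractingWith.fixedPoint T hTc :=
    hTc.fixedPoint_isFixedPt
  set u := ContractingWith.fixedPoint T hTc
  refine ⟨u, ⟨hfix ▸ hTS u, fun v hv => ?_⟩, ?_⟩
  · have h := hT u v hv
    rw [hfix, sub_sub_cancel, real_inner_smul_left, hGin] at h
    have h' : 0 ≤ ρ * (B u (v - u) + J v - J u) := by linarith
    exact nonneg_of_mul_nonneg_right h' hρ0
  · rintro u' ⟨hu', h'⟩
    have h1 := h' u (hfix ▸ hTS u)
    have h2 := hT u u' hu'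
    rw [hfix, sub_sub_cancel, real_inner_smul_left, hGin] at h2
    have h3 : 0 ≤ B u (u' - u) + J u' - J u :=
      nonneg_of_mul_nonneg_right (by linarith : 0 ≤ ρ * (B u (u' - u) + J u' - J u)) hρ0
    have h4 := hmono u' u
    rw [_root_.sub_apply] at h4
    rw [← neg_sub u' u, map_neg] at h1
    have h5 : c * ‖u' - u‖ ^ 2 ≤ 0 := by linarith
    have h6 : ‖u' - u‖ ^ 2 ≤ 0 := nonpos_of_mul_nonpos_right h5 hc
    exact sub_eq_zero.1 (norm_eq_zero.1 (pow_eq_zero_iff two_ne_zero |>.1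
      (le_antisymm h6 (sq_nonneg _))))

end VariationalInequality

section Integral

lemma MeasureTheory.MemLp.integrable_quadratic_bound {E Δ : Type*} [NormedAddCommGroup E]
    [MeasurableSpace Δ] {μ : Measure Δ} [IsFiniteMeasure μ] {z w : Δ → E} (hz : MemLp z 2 μ)
    (hw : MemLp w 2 μ) (c α : ℝ) :
    Integrable (fun x => c * (1 + ‖z x‖ + ‖w x‖) * ‖w x‖ + α / 2 * ‖w x‖ ^ 2) μ := by
  have h1 : Integrable (fun x => ‖w x‖) μ := (hw.integrable one_le_two).norm
  have h2 : Integrable (fun x => ‖w x‖ ^ 2) μ := hw.norm.integrable_sq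
  have h3 : Integrable (fun x => ‖z x‖ * ‖w x‖) μ := hz.norm.integrable_mul hw.norm
  refine ((((h1.add h3).add h2).const_mul c).add (h2.const_mul (α / 2))).congr
    (Eventually.of_forall fun x => ?_)
  simp only [Pi.add_apply]
  ring

lemma MeasureTheory.L2.norm_sq_eq_integral {E Δ : Type*} [NormedAddCommGroup E]
    [InnerProductSpace ℝ E] [MeasurableSpace Δ] {μ : Measure Δ} (g : Lp E 2 μ) :
    ‖g‖ ^ 2 = ∫ x, ‖g x‖ ^ 2 ∂μ := by
  rw [← real_inner_self_eq_norm_sq, L2.inner_def]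
  simp_rw [real_inner_self_eq_norm_sq]

variable {E : Type*} [NormedAddCommGroup E] [InnerProductSpace ℝ E]
  {Δ : Type*} [MeasurableSpace Δ] {μ : Measure Δ} [IsFiniteMeasure μ]
  {f : E → ℝ} {c α : ℝ}

lemma integrable_comp_of_exists_subgradient (hf : Continuous f) (hc : 0 ≤ c)
    (hsub : ∀ p, ∃ ξ : E, ‖ξ‖ ≤ c * (1 + ‖p‖) ∧ ∀ w, ⟪ξ, w⟫ - α / 2 * ‖w‖ ^ 2 ≤ f (p + w) - f p)
    {z : Δ → E} (hz : MemLp z 2 μ) : Integrable (fun x => f (z x)) μ := by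
  have h0 : MemLp (fun _ : Δ => (0 : E)) 2 μ := memLp_const 0
  have hsubint : Integrable (fun x => f (z x) - f 0) μ := by
    refine (h0.integrable_quadratic_bound hz c α).mono'
      ((hf.comp_aestronglyMeasurable hz.1).sub aestronglyMeasurable_const)
      (Eventually.of_forall fun x => ?_)
    simpa using abs_sub_le_of_exists_subgradient hc hsub 0 (z x)
  exact (hsubint.add (integrable_const (f 0))).congr
    (Eventually.of_forall fun x => sub_add_cancel _ _)

lemma tendsto_integral_quotient_clarkeDeriv (hf : LocallyLipschitz f) (hc : 0 ≤ c) (hα : 0 ≤ α)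
    (hmon : ∀ z₁ z₂ : E,
      clarkeDeriv f z₁ (z₂ - z₁) + clarkeDeriv f z₂ (z₁ - z₂) ≤ α * ‖z₁ - z₂‖ ^ 2)
    (hsub : ∀ p, ∃ ξ : E, ‖ξ‖ ≤ c * (1 + ‖p‖) ∧ ∀ w, ⟪ξ, w⟫ - α / 2 * ‖w‖ ^ 2 ≤ f (p + w) - f p)
    {z w : Δ → E} (hz : MemLp z 2 μ) (hw : MemLp w 2 μ) :
    Tendsto (fun t : ℝ => (∫ x, f (z x + t • w x) ∂μ - ∫ x, f (z x) ∂μ) / t) (𝓝[>] 0)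
      (𝓝 (∫ x, clarkeDeriv f (z x) (w x) ∂μ)) := by
  have hintg : ∀ t : ℝ, (∫ x, f (z x + t • w x) ∂μ - ∫ x, f (z x) ∂μ) / t =
      ∫ x, (f (z x + t • w x) - f (z x)) / t ∂μ := by
    intro t
    have h : Integrable (fun x => f (z x + t • w x)) μ :=
      integrable_comp_of_exists_subgradient hf.continuous hc hsub (hz.add (hw.const_smul t))
    rw [integral_div, integral_sub h
      (integrable_comp_of_exists_subgradient hf.continuous hc hsub hz)]
  simp_rw [hintg]
  refine tendsto_integral_filter_of_dominated_convergence _ ?_ ?_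
    (hz.integrable_quadratic_bound hw c α)
    (Eventually.of_forall fun x => hf.tendsto_quotient_clarkeDeriv hmon (z x) (w x))
  · refine Eventually.of_forall fun t => ?_
    simp_rw [div_eq_mul_inv]
    exact ((hf.continuous.comp_aestronglyMeasurable (hz.1.add (hw.1.const_smul t))).sub
      (hf.continuous.comp_aestronglyMeasurable hz.1)).mul_const t⁻¹
  · filter_upwards [Ioo_mem_nhdsGT one_pos] with t ht
    exact Eventually.of_forall fun x =>
      abs_quotient_le_of_exists_subgradient hc hα hsub (z x) (w x) ht.1 ht.2.le

lemma convexOn_integral_comp_add_sq (hf : Continuous f) (hc : 0 ≤ c)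
    (hsub : ∀ p, ∃ ξ : E, ‖ξ‖ ≤ c * (1 + ‖p‖) ∧ ∀ w, ⟪ξ, w⟫ - α / 2 * ‖w‖ ^ 2 ≤ f (p + w) - f p) :
    ConvexOn ℝ Set.univ fun g : Lp E 2 μ => ∫ x, f (g x) ∂μ + α / 2 * ‖g‖ ^ 2 := by
  have hintg : ∀ g : Lp E 2 μ, Integrable (fun x => f (g x) + α / 2 * ‖g x‖ ^ 2) μ := fun g =>
    (integrable_comp_of_exists_subgradient hf hc hsub (Lp.memLp g)).add
      ((Lp.memLp g).norm.integrable_sq.const_mul _)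
  have heq : ∀ g : Lp E 2 μ, ∫ x, f (g x) ∂μ + α / 2 * ‖g‖ ^ 2 =
      ∫ x, (f (g x) + α / 2 * ‖g x‖ ^ 2) ∂μ := by
    intro g
    rw [L2.norm_sq_eq_integral, ← integral_const_mul,
      integral_add (integrable_comp_of_exists_subgradient hf hc hsub (Lp.memLp g))
      ((Lp.memLp g).norm.integrable_sq.const_mul _)]
  simp_rw [heq]
  refine ⟨convex_univ, fun g _ k _ a b ha hb hab => ?_⟩
  simp only [smul_eq_mul]
  rw [← integral_const_mul, ← integral_const_mul,
    ← integral_add ((hintg g).const_mul a) ((hintg k).const_mul b)]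
  refine integral_mono_ae (hintg _) (((hintg g).const_mul a).add ((hintg k).const_mul b)) ?_
  filter_upwards [Lp.coeFn_add (a • g) (b • k), Lp.coeFn_smul a g, Lp.coeFn_smul b k]
    with x h1 h2 h3
  rw [h1, Pi.add_apply, h2, h3]
  exact (convexOn_add_sq_of_exists_subgradient hsub).2 (Set.mem_univ (g x)) (Set.mem_univ (k x))
    ha hb hab

lemma tendsto_integral_quotient_clarkeDeriv_Lp (hf : LocallyLipschitz f) (hc : 0 ≤ c) (hα : 0 ≤ α)
    (hmon : ∀ z₁ z₂ : E,
      clarkeDeriv f z₁ (z₂ - z₁) + clarkeDeriv f z₂ (z₁ - z₂) ≤ α * ‖z₁ - z₂‖ ^ 2)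
    (hsub : ∀ p, ∃ ξ : E, ‖ξ‖ ≤ c * (1 + ‖p‖) ∧ ∀ w, ⟪ξ, w⟫ - α / 2 * ‖w‖ ^ 2 ≤ f (p + w) - f p)
    (g k : Lp E 2 μ) :
    Tendsto (fun t : ℝ => (∫ x, f ((g + t • (k - g) : Lp E 2 μ) x) ∂μ - ∫ x, f (g x) ∂μ) / t)
      (𝓝[>] 0) (𝓝 (∫ x, clarkeDeriv f (g x) (k x - g x) ∂μ)) := by
  refine (tendsto_integral_quotient_clarkeDeriv hf hc hα hmon hsub (Lp.memLp g)
    ((Lp.memLp k).sub (Lp.memLp g))).congr fun t => ?_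
  congr 2
  refine integral_congr_ae ?_
  filter_upwards [Lp.coeFn_add g (t • (k - g)), Lp.coeFn_smul t (k - g), Lp.coeFn_sub k g]
    with x h1 h2 h3
  rw [h1, Pi.add_apply, h2, Pi.smul_apply, h3]

end Integral

theorem stmt14 {V : Type*} [NormedAddCommGroup V] [InnerProductSpace ℝ V] [CompleteSpace V]
    {Δ : Type*} [MeasurableSpace Δ] (μ : Measure Δ) [IsFiniteMeasure μ]
    (m : ℕ) (hm : 1 ≤ m)
    (γψ : V →L[ℝ] (Lp (EuclideanSpace ℝ (Fin m)) 2 μ))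
    (cΔ : ℝ) (hcΔ : 0 < cΔ) (hγ : ∀ v : V, ‖γψ v‖ ≤ cΔ * ‖v‖)
    (ψ : EuclideanSpace ℝ (Fin m) → ℝ)
    (hψlip : ∀ z : EuclideanSpace ℝ (Fin m),
      ∃ (L : NNReal) (s : Set (EuclideanSpace ℝ (Fin m))), s ∈ 𝓝 z ∧ LipschitzOnWith L ψ s)
    (cψ : ℝ) (hcψ : 0 ≤ cψ)
    (hψgrowth : ∀ z ξ : EuclideanSpace ℝ (Fin m),
      (∀ w, ⟪ξ, w⟫ ≤ clarkeDeriv ψ z w) → ‖ξ‖ ≤ cψ * (1 + ‖z‖))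
    (αψ : ℝ) (hαψ : 0 ≤ αψ)
    (hψmon : ∀ z₁ z₂ : EuclideanSpace ℝ (Fin m),
      clarkeDeriv ψ z₁ (z₂ - z₁) + clarkeDeriv ψ z₂ (z₁ - z₂) ≤ αψ * ‖z₁ - z₂‖ ^ 2)
    (K : Set V) (hKne : K.Nonempty) (hKcl : IsClosed K) (hKcv : Convex ℝ K)
    (A : V → (V →L[ℝ] ℝ)) (LA : ℝ) (hLA : 0 < LA)
    (hALip : ∀ v₁ v₂ : V, ‖A v₁ - A v₂‖ ≤ LA * ‖v₁ - v₂‖)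
    (mA : ℝ) (hmA : 0 < mA)
    (hAmon : ∀ v₁ v₂ : V, (A v₁ - A v₂) (v₁ - v₂) ≥ mA * ‖v₁ - v₂‖ ^ 2)
    (Φ : V → ℝ) (hΦcv : ConvexOn ℝ Set.univ Φ) (hΦcont : Continuous Φ)
    (f : V →L[ℝ] ℝ) (hsmall : αψ * cΔ ^ 2 < mA)
    (Vh : Submodule ℝ V) [FiniteDimensional ℝ Vh]
    (Kh : Set V) (hKhne : Kh.Nonempty) (hKhcl : IsClosed Kh) (hKhcv : Convex ℝ Kh)
    (hKhsub : Kh ⊆ (Vh : Set V)) :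
    ∃! uh : V, uh ∈ Kh ∧ ∀ vh ∈ Kh,
      (A uh) (vh - uh) + Φ vh - Φ uh +
        (∫ x, clarkeDeriv ψ ((γψ uh) x) ((γψ vh) x - (γψ uh) x) ∂μ) ≥ f (vh - uh) := by
  have hψ : LocallyLipschitz ψ := fun z => hψlip z
  have hsub : ∀ p, ∃ ξ : EuclideanSpace ℝ (Fin m), ‖ξ‖ ≤ cψ * (1 + ‖p‖) ∧
      ∀ w, ⟪ξ, w⟫ - αψ / 2 * ‖w‖ ^ 2 ≤ ψ (p + w) - ψ p := by
    intro p
    obtain ⟨ξ, hξ⟩ := hψ.exists_inner_le_clarkeDeriv p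
    exact ⟨ξ, hψgrowth p ξ hξ, fun w =>
      (sub_le_sub_right (hξ w) _).trans (hψ.clarkeDeriv_sub_le hψmon p w)⟩
  set Ψ : Lp (EuclideanSpace ℝ (Fin m)) 2 μ → ℝ := fun g => ∫ x, ψ (g x) ∂μ with hΨ
  have hΨcv : ConvexOn ℝ Set.univ fun v : V => Ψ (γψ v) + αψ / 2 * ‖γψ v‖ ^ 2 :=
    (convexOn_integral_comp_add_sq hψ.continuous hcψ hsub).comp_linearMap γψ.toLinearMap
  have hΨlim : ∀ u v : V, Tendsto (fun t : ℝ => (Ψ (γψ (u + t • (v - u))) - Ψ (γψ u)) / t)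
      (𝓝[>] 0) (𝓝 (∫ x, clarkeDeriv ψ (γψ u x) (γψ v x - γψ u x) ∂μ)) := by
    intro u v
    simp only [map_add, map_smul, map_sub]
    exact tendsto_integral_quotient_clarkeDeriv_Lp hψ hcψ hαψ hψmon hsub (γψ u) (γψ v)
  have hnorm : ∀ (u v : V) (t : ℝ), ‖γψ (u + t • (v - u))‖ ^ 2 =
      ‖γψ u‖ ^ 2 + 2 * (t * ⟪γψ u, γψ (v - u)⟫) + t ^ 2 * ‖γψ (v - u)‖ ^ 2 := by
    intro u v t
    rw [map_add, map_smul, norm_add_sq_real, inner_smul_right, norm_smul, mul_pow,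
      Real.norm_eq_abs, sq_abs]
  have hcomb : ∀ (u v : V) (t : ℝ), (1 - t) • u + t • v = u + t • (v - u) :=
    fun u v t => by module
  set J : V → ℝ := fun v => Φ v + (Ψ (γψ v) + αψ / 2 * ‖γψ v‖ ^ 2) with hJdef
  have hJ : ConvexOn ℝ Set.univ J := hΦcv.add hΨcv
  set D : V → V →L[ℝ] ℝ := fun u => αψ • (innerSL ℝ (γψ u)).comp γψ with hD
  have hDapp : ∀ u w, D u w = αψ * ⟪γψ u, γψ w⟫ := fun u w => rfl
  set B : V → V →L[ℝ] ℝ := fun u => A u - D u - f with hB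
  have hBapp : ∀ u w, B u w = A u w - αψ * ⟪γψ u, γψ w⟫ - f w := fun u w => rfl
  have hDsub : ∀ u v w, (D u - D v) w = αψ * ⟪γψ (u - v), γψ w⟫ := by
    intro u v w
    rw [_root_.sub_apply, hDapp, hDapp, map_sub, inner_sub_left]
    ring
  have hγ2 : ∀ v, ‖γψ v‖ ^ 2 ≤ cΔ ^ 2 * ‖v‖ ^ 2 := fun v => by
    rw [← mul_pow]
    exact pow_le_pow_left₀ (norm_nonneg _) (hγ v) 2
  have hBmono : ∀ u v, (mA - αψ * cΔ ^ 2) * ‖u - v‖ ^ 2 ≤ (B u - B v) (u - v) := by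
    intro u v
    have e : B u - B v = (A u - A v) - (D u - D v) := by
      simp only [hB]
      abel
    rw [e, _root_.sub_apply, hDsub, real_inner_self_eq_norm_sq]
    have := mul_le_mul_of_nonneg_left (hγ2 (u - v)) hαψ
    linarith [hAmon u v]
  have hBLip : ∀ u v, ‖B u - B v‖ ≤ (LA + αψ * cΔ ^ 2) * ‖u - v‖ := by
    intro u v
    have e : B u - B v = (A u - A v) - (D u - D v) := by
      simp only [hB]
      abel
    have hDn : ‖D u - D v‖ ≤ αψ * cΔ ^ 2 * ‖u - v‖ := by
      refine ContinuousLinearMap.opNorm_le_bound _ (by positivity) fun w => ?_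
      rw [hDsub, norm_mul, Real.norm_eq_abs, abs_of_nonneg hαψ, Real.norm_eq_abs]
      have h1 := abs_real_inner_le_norm (γψ (u - v)) (γψ w)
      have h2 : ‖γψ (u - v)‖ * ‖γψ w‖ ≤ (cΔ * ‖u - v‖) * (cΔ * ‖w‖) :=
        mul_le_mul (hγ _) (hγ _) (norm_nonneg _) (by positivity)
      calc αψ * |⟪γψ (u - v), γψ w⟫| ≤ αψ * ((cΔ * ‖u - v‖) * (cΔ * ‖w‖)) :=
            mul_le_mul_of_nonneg_left (h1.trans h2) hαψ
        _ = αψ * cΔ ^ 2 * ‖u - v‖ * ‖w‖ := by ring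
    rw [e]
    refine (norm_sub_le _ _).trans ?_
    linarith [hALip u v]
  have hequiv : ∀ u : V, (u ∈ Kh ∧ ∀ v ∈ Kh, (A u) (v - u) + Φ v - Φ u +
        (∫ x, clarkeDeriv ψ ((γψ u) x) ((γψ v) x - (γψ u) x) ∂μ) ≥ f (v - u)) ↔
      (u ∈ Kh ∧ ∀ v ∈ Kh, 0 ≤ B u (v - u) + J v - J u) := by
    intro u
    refine and_congr_right fun hu => ⟨fun h v hv => ?_, fun h v hv => ?_⟩
    · have hle : ∫ x, clarkeDeriv ψ ((γψ u) x) ((γψ v) x - (γψ u) x) ∂μ ≤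
          Ψ (γψ v) + αψ / 2 * ‖γψ v‖ ^ 2 - (Ψ (γψ u) + αψ / 2 * ‖γψ u‖ ^ 2) -
            αψ * ⟪γψ u, γψ (v - u)⟫ := by
        refine le_of_tendsto (hΨlim u v) ?_
        filter_upwards [Ioo_mem_nhdsGT one_pos] with t ht
        have h1 := hΨcv.2 (Set.mem_univ u) (Set.mem_univ v)
          (show 0 ≤ 1 - t by linarith [ht.2]) ht.1.le (by ring)
        simp only [smul_eq_mul] at h1
        rw [hcomb, hnorm] at h1
        rw [div_le_iff₀ ht.1]
        have h2 : 0 ≤ αψ / 2 * (t ^ 2 * ‖γψ (v - u)‖ ^ 2) := by positivity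
        linarith
      have := h v hv
      rw [hBapp]
      simp only [hJdef]
      linarith
    · have hlim : Tendsto (fun t : ℝ => B u (v - u) + Φ v - Φ u + αψ * ⟪γψ u, γψ (v - u)⟫ +
          t * (αψ / 2 * ‖γψ (v - u)‖ ^ 2) + (Ψ (γψ (u + t • (v - u))) - Ψ (γψ u)) / t) (𝓝[>] 0)
          (𝓝 (B u (v - u) + Φ v - Φ u + αψ * ⟪γψ u, γψ (v - u)⟫ +
            ∫ x, clarkeDeriv ψ ((γψ u) x) ((γψ v) x - (γψ u) x) ∂μ)) := by
        refine Tendsto.add ?_ (hΨlim u v)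
        have : Continuous fun t : ℝ => B u (v - u) + Φ v - Φ u + αψ * ⟪γψ u, γψ (v - u)⟫ +
          t * (αψ / 2 * ‖γψ (v - u)‖ ^ 2) := by fun_prop
        simpa using (this.tendsto 0).mono_left nhdsWithin_le_nhds
      have hge := ge_of_tendsto (b := 0) hlim (by
        filter_upwards [Ioo_mem_nhdsGT one_pos] with t ht
        have ht' : 0 ≤ 1 - t := by linarith [ht.2]
        have h1 := h _ (hKhcv hu hv ht' ht.1.le (by ring))
        have h2 := hΦcv.2 (Set.mem_univ u) (Set.mem_univ v) ht' ht.1.le (by ring)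
        rw [hcomb] at h1 h2
        simp only [hJdef, smul_eq_mul] at h1 h2
        rw [hnorm, add_sub_cancel_left, map_smul, smul_eq_mul] at h1
        have e : (Ψ (γψ (u + t • (v - u))) - Ψ (γψ u)) / t * t =
            Ψ (γψ (u + t • (v - u))) - Ψ (γψ u) := div_mul_cancel₀ _ ht.1.ne'
        refine nonneg_of_mul_nonneg_left ?_ ht.1
        rw [add_mul, e]
        linarith)
      rw [hBapp] at hge
      linarith
  simp_rw [hequiv]
  exact hJ.existsUnique_variationalInequality Vh hKhne hKhcl hKhcv hKhsub B
    (sub_pos.2 hsmall) hBLip hBmono
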